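/- Let (R,m) be an ℕ-graded isolated non-F-rational singularity of dimension d over a field of characteristic p > 0, x_1,...,x_d a homogeneous sop, and φ : R → R̄ = R/x_dR the natural surjection. Then φ induces a well-defined map φ̄ : (x_1,...,x_d)^* → (x̄_1,...,x̄_{d-1})^*/(x̄_1,...,x̄_{d-1})^lim with ker φ̄ ⊆ (x_1,...,x_d)^lim. Consequently, for any n ∈ ℤ, if [(x_1,...,x_d)^*/(x_1,...,x_d)^lim]_n ≠ 0 then [(x̄_1,...,x̄_{d-1})^*/(x̄_1,...,x̄_{d-1})^lim]_n ≠ 0. -/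

import Mathlib

universe u

open IsLocalRing

noncomputable section

def offMinimalPrimes (R : Type*) [CommRing R] : Set R :=
  {c : R | ∀ P ∈ minimalPrimes R, c ∉ P}

def frobeniusPower {R : Type*} [CommRing R] (I : Ideal R) (q : ℕ) : Ideal R :=
  Ideal.span ((fun r => r ^ q) '' (I : Set R))

def tightClosure {R : Type*} [CommRing R] (p : ℕ) (I : Ideal R) : Set R :=
  {z : R | ∃ c ∈ offMinimalPrimes R, ∃ e₀ : ℕ, ∀ e ≥ e₀,
    c * z ^ p ^ e ∈ frobeniusPower I (p ^ e)}

def idealHeight {R : Type*} [CommRing R] (I : Ideal R) : ℕ∞ :=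
  ⨅ (P : PrimeSpectrum R) (_ : I ≤ P.asIdeal), Order.height P

/-- A parameter ideal: generated by as many elements as its height. -/
def IsParameterIdeal {R : Type*} [CommRing R] (I : Ideal R) : Prop :=
  ∃ (n : ℕ) (y : Fin n → R), I = Ideal.span (Set.range y) ∧ idealHeight I = (n : ℕ∞)

/-- `F`-rationality: every parameter ideal is tightly closed. -/
def IsFRational (p : ℕ) (S : Type*) [CommRing S] : Prop :=
  ∀ I : Ideal S, IsParameterIdeal I → tightClosure p I = (I : Set S)

/-- Isolated non-`F`-rational singularity: `R_P` is `F`-rational for every prime `P ≠ 𝔪`. -/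
def IsIsolatedNonFRational {R : Type*} [CommRing R] (p : ℕ) (𝔪 : Ideal R) : Prop :=
  ∀ P : PrimeSpectrum R, P.asIdeal ≠ 𝔪 → IsFRational p (Localization.AtPrime P.asIdeal)

/-- The ideal generated by the first `i` entries of `x`. -/
def firstIdeal {R : Type*} [CommRing R] {d : ℕ} (x : Fin d → R) (i : ℕ) : Ideal R :=
  Ideal.span (x '' {j : Fin d | (j : ℕ) < i})

/-- The limit closure `(x_1,…,x_i)^lim`. -/
def firstLimitClosure {R : Type*} [CommRing R] {d : ℕ} (x : Fin d → R) (i : ℕ) : Set R :=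
  {z : R | ∃ s ≥ 1,
    (∏ j ∈ Finset.univ.filter (fun j : Fin d => (j : ℕ) < i), x j) ^ (s - 1) * z ∈
      Ideal.span ((fun j => x j ^ s) '' {j : Fin d | (j : ℕ) < i})}

/-- The grading of `R` extended to `ℤ` (zero in negative degrees). -/
def gradeZ {K R : Type*} [Field K] [CommRing R] [Algebra K R]
    (𝒜 : ℕ → Submodule K R) (n : ℤ) : Submodule K R :=
  if 0 ≤ n then 𝒜 n.toNat else ⊥

/-- The degree-`m` part of the quotient `T/L` of two ideals, induced by the grading of `R`. -/
def quotientGradedPiece {K R : Type*} [Field K] [CommRing R] [Algebra K R]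
    (𝒜 : ℕ → Submodule K R) (T L : Ideal R) (m : ℤ) :
    AddSubgroup (T ⧸ Submodule.comap T.subtype L) :=
  AddSubgroup.map (Submodule.mkQ (Submodule.comap T.subtype L)).toAddMonoidHom
    (AddSubgroup.comap T.subtype.toAddMonoidHom (gradeZ 𝒜 m).toAddSubgroup)

end

/-- The limit closure of a full sequence `y`. -/
def limitClosure {S : Type*} [CommRing S] {i : ℕ} (y : Fin i → S) : Set S :=
  {z : S | ∃ s ≥ 1, (∏ j, y j) ^ (s - 1) * z ∈ Ideal.span (Set.range fun j => y j ^ s)}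


open TensorProduct


lemma frob_integral {B : Type} [CommRing B] (p : ℕ) [Fact p.Prime] [CharP B p] :
    (frobenius B p).IsIntegral := by
  intro x
  refine ⟨Polynomial.X ^ p - Polynomial.C x, Polynomial.monic_X_pow_sub_C _ (Fact.out : p.Prime).ne_zero, ?_⟩
  simp [frobenius_def]

lemma frob_finite_field {k : Type} [Field k] (p : ℕ) [Fact p.Prime] [CharP k p]
    [Algebra (ZMod p) k] [Algebra.EssFiniteType (ZMod p) k] : (frobenius k p).FiniteType := by
  have h1 : (algebraMap (ZMod p) k).EssFiniteType := RingHom.essFiniteType_algebraMap.mpr inferInstance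
  have h2 : ((frobenius k p).comp (algebraMap (ZMod p) k)) = algebraMap (ZMod p) k := Subsingleton.elim _ _
  have h3 : (frobenius k p).EssFiniteType := by
    apply RingHom.EssFiniteType.of_comp (algebraMap (ZMod p) k)
    rw [h2]; exact h1
  have hInteg := frob_integral (B := k) p
  have gen : ∀ (E : Type) [Field E] (f : k →+* E), f.EssFiniteType → f.IsIntegral → f.FiniteType := by
    intro E _ f hf hi
    let := f.toAlgebra
    have : Algebra.EssFiniteType k E := hf
    have : Algebra.IsIntegral k E := ⟨hi⟩
    have := Algebra.finite_of_essFiniteType_of_isAlgebraic (F := k) (E := E)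
    exact (inferInstance : Algebra.FiniteType k E)
  exact gen k _ h3 hInteg

lemma frob_finite {k B : Type} [Field k] [CommRing B] [Algebra k B] [Algebra.FiniteType k B]
    (p : ℕ) [Fact p.Prime] [CharP k p] [CharP B p] (h : (frobenius k p).FiniteType) :
    (frobenius B p).Finite := by
  refine RingHom.IsIntegral.to_finite (frob_integral p) ?_
  apply RingHom.FiniteType.of_comp_finiteType (f := algebraMap k B)
  have : (frobenius B p).comp (algebraMap k B) = (algebraMap k B).comp (frobenius k p) := by
    ext x; simp [frobenius_def]
  rw [this]
  exact RingHom.FiniteType.comp (RingHom.finiteType_algebraMap.mpr inferInstance) h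

lemma descent_flat {k K B R : Type} [Field k] [Field K] [Algebra k K] [CommRing B] [Algebra k B]
    [CommRing R] (e : K ⊗[k] B ≃+* R) :
    (e.toRingHom.comp
    (Algebra.TensorProduct.includeRight : B →ₐ[k] K ⊗[k] B).toRingHom).FaithfullyFlat := by
  refine RingHom.FaithfullyFlat.stableUnderComposition _ _ ?_
    (RingHom.FaithfullyFlat.of_bijective (f := e.toRingHom) e.bijective)
  have h1 : (algebraMap B (B ⊗[k] K)).FaithfullyFlat := by
    rw [RingHom.faithfullyFlat_algebraMap_iff]; infer_instance
  have e : (Algebra.TensorProduct.includeRight : B →ₐ[k] K ⊗[k] B).toRingHom =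
    (Algebra.TensorProduct.comm k B K).toRingEquiv.toRingHom.comp (algebraMap B (B ⊗[k] K)) := by
    ext x <;> simp
  rw [e]
  exact RingHom.FaithfullyFlat.stableUnderComposition _ _ h1
    (RingHom.FaithfullyFlat.of_bijective (f := (Algebra.TensorProduct.comm k B K).toRingEquiv.toRingHom)
      (Algebra.TensorProduct.comm k B K).bijective)

lemma descent {K R : Type} [Field K] [CommRing R] [Algebra K R] [Algebra.FiniteType K R]
    (p : ℕ) [Fact p.Prime] [CharP K p] [CharP R p] (T : Set R) (hT : T.Finite) :
    ∃ (B : Type) (_ : CommRing B) (_ : CharP B p) (g : B →+* R), g.FaithfullyFlat ∧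
      IsNoetherianRing B ∧ (frobenius B p).Finite ∧ T ⊆ Set.range g := by
  classical
  let : Algebra (ZMod p) K := ZMod.algebra K p
  have : Algebra.FinitePresentation K R := Algebra.FinitePresentation.of_finiteType.mp inferInstance
  let P := Algebra.Presentation.ofFinitePresentation K R
  let S : Set K := P.coeffs ∪ ⋃ t ∈ T, (↑(P.σ t).coeffs : Set K)
  have hS : S.Finite := P.finite_coeffs.union (hT.biUnion fun t _ => Finset.finite_toSet _)
  let k := IntermediateField.adjoin (ZMod p) S
  have : Algebra.EssFiniteType (ZMod p) k := by
    rw [IntermediateField.essFiniteType_iff]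
    exact ⟨hS.toFinset, by simp [k]⟩
  have hSk : S ⊆ Set.range (algebraMap k K) := by
    intro s hs
    exact ⟨⟨s, IntermediateField.subset_adjoin _ _ hs⟩, rfl⟩
  have : P.HasCoeffs k := ⟨fun s hs => hSk (Or.inl hs)⟩
  let B := P.ModelOfHasCoeffs k
  let e : K ⊗[k] B ≃+* R := (P.tensorModelOfHasCoeffsEquiv k).toRingEquiv
  let g : B →+* R := e.toRingHom.comp
    (Algebra.TensorProduct.includeRight : B →ₐ[k] K ⊗[k] B).toRingHom
  have hg : g.FaithfullyFlat := descent_flat e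
  have : CharP B p := (RingHom.charP_iff g hg.injective p).mpr inferInstance
  have : Algebra.FiniteType k B := inferInstance
  refine ⟨B, inferInstance, inferInstance, g, hg, Algebra.FiniteType.isNoetherianRing k B, ?_, ?_⟩
  · exact frob_finite (k := k) p (frob_finite_field p)
  · intro t ht
    have : P.σ t ∈ Set.range (MvPolynomial.map (algebraMap k K)) := by
      rw [MvPolynomial.mem_range_map_iff_coeffs_subset]
      exact fun s hs => hSk (Or.inr (Set.mem_biUnion ht hs))
    obtain ⟨q, hq⟩ := this
    refine ⟨Ideal.Quotient.mk _ q, ?_⟩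
    have := P.aeval_val_σ t
    rw [← hq, MvPolynomial.aeval_map_algebraMap] at this
    change (P.tensorModelOfHasCoeffsEquiv k) (1 ⊗ₜ (Ideal.Quotient.mk _ q)) = t
    refine Eq.trans ?_ this
    refine (P.tensorModelOfHasCoeffsEquiv_tmul k 1 q).trans ?_
    rw [map_one, one_mul]

lemma local_pid (A : Type) [CommRing A] [IsNoetherianRing A] [IsLocalRing A] [IsReduced A]
    (t : A) (ht : maximalIdeal A = Ideal.span {t}) : IsDomain A ∧ IsPrincipalIdealRing A := by
  have key : ∀ a : A, a ≠ 0 → ∃ (k : ℕ) (v : A), IsUnit v ∧ a = t ^ k * v := by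
    intro a ha
    have hk : ∃ k, a ∉ maximalIdeal A ^ k := by
      by_contra! h
      apply ha
      have := Ideal.iInf_pow_eq_bot_of_isLocalRing (maximalIdeal A) (maximalIdeal.isMaximal A).ne_top
      rw [← Ideal.mem_bot, ← this]
      simpa using h
    classical
    have hm := Nat.find_spec hk
    have h0 : Nat.find hk ≠ 0 := by
      intro h; rw [h] at hm; simp at hm
    obtain ⟨k, hk'⟩ := Nat.exists_eq_succ_of_ne_zero h0
    have hmem : a ∈ maximalIdeal A ^ k := by
      by_contra h
      exact absurd (Nat.find_min' hk h) (by omega)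
    rw [ht, Ideal.span_singleton_pow, Ideal.mem_span_singleton] at hmem
    obtain ⟨v, rfl⟩ := hmem
    refine ⟨k, v, ?_, rfl⟩
    by_contra hv
    apply hm
    have : v ∈ maximalIdeal A := hv
    rw [hk', Nat.succ_eq_add_one, pow_succ]
    refine Ideal.mul_mem_mul (Ideal.pow_mem_pow ?_ k) this
    rw [ht]; exact Ideal.mem_span_singleton_self t
  have hdom : IsDomain A := by
    have : NoZeroDivisors A := by
      constructor
      intro a b hab
      by_contra! h
      obtain ⟨k, v, hv, rfl⟩ := key a h.1
      obtain ⟨l, w, hw, rfl⟩ := key b h.2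
      have h1 : t ^ (k + l) * (v * w) = 0 := by rw [← hab]; ring
      rw [(hv.mul hw).mul_left_eq_zero] at h1
      have ht0 : t = 0 := IsReduced.eq_zero _ ⟨_, h1⟩
      have h2 : ∀ k : ℕ, ∀ v : A, t ^ k * v ≠ 0 → k = 0 := by
        intro k v h
        by_contra hk
        exact h (by rw [ht0, zero_pow hk, zero_mul])
      obtain rfl := h2 _ _ h.1
      obtain rfl := h2 _ _ h.2
      simp only [pow_zero, one_mul] at hab
      exact (hv.mul hw).ne_zero hab
    exact NoZeroDivisors.to_isDomain A
  refine ⟨hdom, ?_⟩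
  exact ((tfae_of_isNoetherianRing_of_isLocalRing_of_isDomain A).out 0 4).mpr (⟨t, ht⟩ : (maximalIdeal A).IsPrincipal)

lemma locmk_eq_zero_iff {B C : Type} [CommRing B] [AddCommGroup C] [Module B C] (S : Submonoid B)
    (m : C) (s : S) : LocalizedModule.mk m s = 0 ↔ ∃ u : S, (u : B) • m = 0 := by
  rw [← LocalizedModule.zero_mk (1 : S), LocalizedModule.mk_eq]
  simp [Submonoid.smul_def]

lemma exists_functional {B C : Type} [CommRing B] [CommRing C] [IsNoetherianRing B]
    (f : B →+* C) (hf : f.Finite) (Q : Ideal B) [Q.IsPrime]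
    [IsDomain (Localization.AtPrime Q)] [IsPrincipalIdealRing (Localization.AtPrime Q)]
    (p0 : B) (hp0 : maximalIdeal (Localization.AtPrime Q) = Ideal.span {algebraMap B _ p0})
    (htf : ∀ (a : B) (m : C), algebraMap B (Localization.AtPrime Q) a ≠ 0 → f a * m = 0 →
      ∃ s, s ∉ Q ∧ f s * m = 0)
    (c : C) (hc : ∀ (s : B) (m : C), s ∉ Q → f s * c ≠ f p0 * m) :
    ∃ θ : C →+ B, (∀ r s, θ (f r * s) = r * θ s) ∧ θ c ∉ Q := by
  let _ := f.toAlgebra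
  have : Module.Finite B C := hf
  let A := Localization.AtPrime Q
  let M := LocalizedModule Q.primeCompl C
  have hsm : ∀ (b : B) (m : C), b • m = f b * m := fun b m => rfl
  have : Module.IsTorsionFree A M := by
    rw [Module.isTorsionFree_iff_smul_eq_zero]
    intro a m ham
    by_contra! h
    obtain ⟨h1, h2⟩ := h
    induction m using LocalizedModule.induction_on with | _ m s
    induction a using Localization.induction_on with | _ as
    obtain ⟨a0, s0⟩ := as
    dsimp only at h1 ham
    rw [LocalizedModule.mk_smul_mk, locmk_eq_zero_iff] at ham
    obtain ⟨u, hu⟩ := ham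
    obtain ⟨s', hs', h3⟩ := htf (u * a0) m (by
      rw [map_mul]
      refine mul_ne_zero (IsLocalization.map_units A u).ne_zero ?_
      intro h0
      rw [Localization.mk_eq_mk'] at h1
      exact h1 (IsLocalization.mk'_eq_zero_iff _ _ |>.mpr (by
        rwa [IsLocalization.map_eq_zero_iff Q.primeCompl] at h0))) (by
      rw [map_mul, mul_assoc]; exact hu)
    apply h2
    rw [locmk_eq_zero_iff]
    exact ⟨⟨s', hs'⟩, h3⟩
  have : Module.Finite A M := inferInstance
  have : Module.Free A M := inferInstance
  let b := Module.Free.chooseBasis A M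
  let c' : M := LocalizedModule.mkLinearMap Q.primeCompl C c
  have h : ∃ i, b.repr c' i ∉ maximalIdeal A := by
    by_contra! h
    simp_rw [A, hp0, Ideal.mem_span_singleton] at h
    choose v hv using h
    have h1 : c' = (algebraMap B A p0) • ∑ i, v i • b i := by
      rw [← b.sum_repr c', Finset.smul_sum]
      refine Finset.sum_congr rfl fun i _ => ?_
      rw [smul_smul, ← hv]
    generalize (∑ i, v i • b i) = w at h1
    induction w using LocalizedModule.induction_on with | _ m s
    rw [algebraMap_smul, LocalizedModule.smul'_mk] at h1
    have h2 := LocalizedModule.mk_eq.mp h1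
    obtain ⟨u, hu⟩ := h2
    refine hc (u * s) (f u * m) (Q.primeCompl.mul_mem u.2 s.2) ?_
    have h3 : f u * (f s * c) = f u * (f 1 * (f p0 * m)) := hu
    rw [map_mul, mul_assoc, h3, map_one]
    ring
  obtain ⟨i, hi⟩ := h
  let g : C →ₗ[B] A := ((b.coord i).restrictScalars B).comp (LocalizedModule.mkLinearMap Q.primeCompl C)
  have : Module.FinitePresentation B C := Module.finitePresentation_of_finite B C
  obtain ⟨θ, s, hθ⟩ := Module.FinitePresentation.exists_lift_of_isLocalizedModule Q.primeCompl
    (Algebra.linearMap B A) g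
  refine ⟨θ.toAddMonoidHom, ?_, ?_⟩
  · intro r s
    exact θ.map_smul r s
  · intro hm
    have h1 : algebraMap B A (θ c) = (s : B) • b.repr c' i := congrArg (fun F => F c) hθ
    apply hi
    have h2 : algebraMap B A (θ c) ∈ maximalIdeal A := by
      rw [IsLocalization.AtPrime.to_map_mem_maximal_iff A Q]; exact hm
    rw [h1, Algebra.smul_def] at h2
    exact (Ideal.unit_mul_mem_iff_mem _ (IsLocalization.map_units A s)).mp h2

lemma exists_functional_frob {B : Type} [CommRing B] [IsNoetherianRing B] [IsReduced B]
    (p : ℕ) [Fact p.Prime] [CharP B p] (hfin : (frobenius B p).Finite)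
    (Q : Ideal B) [Q.IsPrime] (p0 u : B) (hp0 : p0 ∈ Q) (hu : u ∉ Q)
    (hy : ∀ y ∈ Q, u * y ∈ Ideal.span {p0}) (c : B) (hc : ∀ s, s ∉ Q → s * c ≠ 0) :
    ∃ (e : ℕ) (θ : B →+ B), (∀ r s, θ (r ^ p ^ e * s) = r * θ s) ∧ θ c ∉ Q := by
  let A := Localization.AtPrime Q
  have : IsReduced A := isReduced_localizationPreserves Q.primeCompl A inferInstance
  have hmax : maximalIdeal A = Ideal.span {algebraMap B A p0} := by
    rw [← Localization.AtPrime.map_eq_maximalIdeal]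
    apply le_antisymm
    · rw [Ideal.map_le_iff_le_comap]
      intro y hyQ
      have h1 := Ideal.mem_map_of_mem (algebraMap B A) (hy y hyQ)
      rw [Ideal.map_span, Set.image_singleton, map_mul] at h1
      exact (Ideal.unit_mul_mem_iff_mem _ (IsLocalization.map_units A (⟨u, hu⟩ : Q.primeCompl))).mp h1
    · rw [Ideal.span_singleton_le_iff_mem]
      exact Ideal.mem_map_of_mem _ hp0
  obtain ⟨hdom, hpid⟩ := local_pid A _ hmax
  have hc0 : algebraMap B A c ≠ 0 := by
    intro h
    rw [IsLocalization.map_eq_zero_iff Q.primeCompl] at h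
    obtain ⟨s, hs⟩ := h
    exact hc s s.2 hs
  have hk : ∃ k, algebraMap B A c ∉ maximalIdeal A ^ k := by
    by_contra! h
    apply hc0
    have := Ideal.iInf_pow_eq_bot_of_isLocalRing (maximalIdeal A) (maximalIdeal.isMaximal A).ne_top
    rw [← Ideal.mem_bot, ← this]
    simpa using h
  obtain ⟨e, he⟩ := hk
  have hq : (p ^ e) ≠ 0 := pow_ne_zero _ (Fact.out : p.Prime).ne_zero
  have hfin' : (iterateFrobenius B p e).Finite := by
    clear he hq
    induction e with
    | zero => rw [iterateFrobenius_zero]; exact RingHom.Finite.id _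
    | succ e ih =>
      have : iterateFrobenius B p (e + 1) = (iterateFrobenius B p e).comp (frobenius B p) := by
        ext x; simp [iterateFrobenius_def, frobenius_def, ← pow_mul, pow_succ']
      rw [this]
      exact RingHom.Finite.comp ih hfin
  obtain ⟨θ, h1, h2⟩ := exists_functional (iterateFrobenius B p e) hfin' Q p0 hmax (by
      intro a m ha ham
      rw [iterateFrobenius_def] at ham
      have h1 : algebraMap B A m = 0 := by
        have h2 := congrArg (algebraMap B A) ham
        rw [map_mul, map_pow, map_zero] at h2
        exact (mul_eq_zero.mp h2).resolve_left (pow_ne_zero _ ha)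
      rw [IsLocalization.map_eq_zero_iff Q.primeCompl] at h1
      obtain ⟨s, hs⟩ := h1
      refine ⟨s, s.2, ?_⟩
      rw [iterateFrobenius_def]
      obtain ⟨k, hk⟩ := Nat.exists_eq_succ_of_ne_zero hq
      rw [hk, pow_succ, mul_assoc, hs, mul_zero]) c (by
      intro s m hs h
      apply he
      have hle : e ≤ p ^ e := (Nat.lt_pow_self (Fact.out : p.Prime).one_lt).le
      apply Ideal.pow_le_pow_right hle
      rw [iterateFrobenius_def, iterateFrobenius_def] at h
      have h2 := congrArg (algebraMap B A) h
      rw [map_mul, map_mul, map_pow, map_pow] at h2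
      have h3 : algebraMap B A s ^ p ^ e * algebraMap B A c ∈ maximalIdeal A ^ p ^ e := by
        rw [h2]
        refine Ideal.mul_mem_right _ _ (Ideal.pow_mem_pow ?_ _)
        rw [hmax]; exact Ideal.mem_span_singleton_self _
      exact (Ideal.unit_mul_mem_iff_mem _ ((IsLocalization.map_units A (⟨s, hs⟩ : Q.primeCompl)).pow _)).mp h3)
  exact ⟨e, θ, fun r s => by rw [← h1, iterateFrobenius_def], h2⟩

lemma theta_step {B : Type} [CommRing B] (p : ℕ) [Fact p.Prime] [CharP B p] {d : ℕ} (x : Fin d → B)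
    (z c : B) (e0 : ℕ)
    (h : ∀ e ≥ e0, c * z ^ p ^ e ∈ Ideal.span (Set.range fun j => x j ^ p ^ e))
    (k : ℕ) (θ : B →+ B) (hθ : ∀ r s, θ (r ^ p ^ k * s) = r * θ s) :
    ∀ e ≥ e0, θ c * z ^ p ^ e ∈ Ideal.span (Set.range fun j => x j ^ p ^ e) := by
  intro e he
  have h1 := h (e + k) (by omega)
  rw [Ideal.mem_span_range_iff_exists_fun] at h1
  obtain ⟨b, hb⟩ := h1
  have h2 : θ c * z ^ p ^ e = ∑ i, θ (b i) * x i ^ p ^ e := by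
    have : ∀ s t : B, θ s * t ^ p ^ e = θ (s * t ^ p ^ (e + k)) := by
      intro s t
      rw [pow_add, pow_mul, mul_comm s, hθ, mul_comm]
    simp_rw [this, ← hb, map_sum]
  rw [h2, Ideal.mem_span_range_iff_exists_fun]
  exact ⟨_, rfl⟩

lemma core {K R : Type} [Field K] [CommRing R] [Algebra K R] [Algebra.FiniteType K R] [IsReduced R]
    (p : ℕ) [Fact p.Prime] [CharP K p] [CharP R p] (P : Ideal R) [P.IsPrime]
    (p0 u : R) (hp0 : p0 ∈ P) (hu : u ∉ P)
    (hy : ∀ y ∈ P, u * y ∈ Ideal.span {p0}) {d : ℕ} (x : Fin d → R)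
    (z c : R) (hc : ∀ s, s ∉ P → s * c ≠ 0) (e0 : ℕ)
    (h : ∀ e ≥ e0, c * z ^ p ^ e ∈ Ideal.span (Set.range fun j => x j ^ p ^ e)) :
    ∃ c', c' ∉ P ∧ ∃ e1 : ℕ, ∀ e ≥ e1,
      c' * z ^ p ^ e ∈ Ideal.span (Set.range fun j => x j ^ p ^ e) := by
  classical
  have : IsNoetherianRing R := Algebra.FiniteType.isNoetherianRing K R
  obtain ⟨Y, hY⟩ := (isNoetherianRing_iff_ideal_fg R).mp inferInstance P
  have hYP : ∀ y ∈ Y, y ∈ P := fun y hy' => hY ▸ Ideal.subset_span hy'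
  have hw : ∀ y : R, ∃ w, y ∈ P → u * y = w * p0 := by
    intro y
    by_cases hyP : y ∈ P
    · obtain ⟨w, hw⟩ := Ideal.mem_span_singleton'.mp (hy y hyP)
      exact ⟨w, fun _ => hw.symm⟩
    · exact ⟨0, fun h => absurd h hyP⟩
  choose w hw using hw
  let T : Set R := {p0, u, z, c} ∪ Set.range x ∪ Y ∪ w '' Y
  have hT : T.Finite := by
    refine Set.Finite.union (Set.Finite.union (Set.Finite.union ?_ (Set.finite_range x)) Y.finite_toSet) (Y.finite_toSet.image w)
    simp
  obtain ⟨B, _, _, g, hg, _, hfrob, hTr⟩ := descent (K := K) p T hT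
  have inj := hg.injective
  obtain ⟨p0', hp0'⟩ := hTr (show p0 ∈ T by simp [T])
  obtain ⟨u', hu'⟩ := hTr (show u ∈ T by simp [T])
  obtain ⟨z', hz'⟩ := hTr (show z ∈ T by simp [T])
  obtain ⟨c', hc'⟩ := hTr (show c ∈ T by simp [T])
  have hx' : ∀ j, ∃ x', g x' = x j := fun j => hTr (show x j ∈ T by simp [T])
  choose x' hx' using hx'
  have hcm : ∀ J : Ideal B, (J.map g).comap g = J := by
    intro J
    let _ := g.toAlgebra
    have : Module.FaithfullyFlat B R := hg
    exact Ideal.comap_map_eq_self_of_faithfullyFlat J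
  let Q := P.comap g
  have hQ : Q = Ideal.span (g ⁻¹' (Y : Set R)) := by
    rw [← hcm (Ideal.span (g ⁻¹' (Y : Set R))), Ideal.map_span, Set.image_preimage_eq_of_subset, hY]
    intro y hy'
    exact hTr (show y ∈ T by simp only [T, Set.mem_union]; exact Or.inl (Or.inr hy'))
  have : IsReduced B := isReduced_of_injective g inj
  obtain ⟨k, θ, h1, h2⟩ := exists_functional_frob p hfrob Q p0' u' (by simpa [Q, hp0']) (by simpa [Q, hu'])
    (by
      intro y hyQ
      rw [hQ] at hyQ
      have hle : Ideal.span (g ⁻¹' (Y : Set R)) ≤ (Ideal.span {p0'}).colon {u'} := by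
        rw [Ideal.span_le]
        intro y hy1
        obtain ⟨w', hw'⟩ := hTr (show w (g y) ∈ T by
          simp only [T, Set.mem_union]; exact Or.inr ⟨_, hy1, rfl⟩)
        rw [SetLike.mem_coe, Submodule.mem_colon_singleton, Ideal.mem_span_singleton']
        refine ⟨w', inj ?_⟩
        rw [map_mul, smul_eq_mul, map_mul, hw', hp0', hu', mul_comm (g y)]
        exact (hw _ (hYP _ hy1)).symm
      have := hle hyQ
      rw [Submodule.mem_colon_singleton, smul_eq_mul, mul_comm] at this
      exact this) c' (by
      intro s hs h
      apply hc (g s) hs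
      rw [← hc', ← map_mul, h, map_zero])
  have himg : ∀ e, (Ideal.span (Set.range fun j => x' j ^ p ^ e)).map g =
      Ideal.span (Set.range fun j => x j ^ p ^ e) := by
    intro e
    rw [Ideal.map_span, ← Set.range_comp]
    congr! 3 with j
    simp [hx']
  refine ⟨g (θ c'), h2, e0, ?_⟩
  intro e he
  have h3 := theta_step p x' z' c' e0 (by
    intro e he
    rw [← hcm (Ideal.span _), himg, Ideal.mem_comap, map_mul, map_pow, hc', hz']
    exact h e he) k θ h1 e he
  have h4 := Ideal.mem_map_of_mem g h3
  rwa [himg, map_mul, map_pow, hz'] at h4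

lemma reduced_mul_eq_zero {A : Type} [CommRing A] [IsReduced A] {a v : A}
    (ha : a ∈ offMinimalPrimes A) (h : a * v = 0) : v = 0 := by
  have h1 : v ∈ sInf (minimalPrimes A) := by
    rw [Submodule.mem_sInf]
    intro Q hQ
    have := hQ.1.1
    have h2 : a * v ∈ Q := by rw [h]; exact Q.zero_mem
    exact (this.mem_or_mem h2).resolve_left (ha Q hQ)
  rw [minimalPrimes, Ideal.sInf_minimalPrimes] at h1
  exact (IsReduced.eq_zero v (mem_nilradical.mp h1))

lemma mem_minimalPrimes_of_height_lt {A : Type} [CommRing A] (Q : Ideal A) [Q.IsPrime]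
    (h : Q.height < 1) : Q ∈ minimalPrimes A := by
  rw [Order.lt_one_iff] at h
  exact Ideal.height_eq_zero_iff.mp h 

lemma principal_of_FRational {A : Type} [CommRing A] [IsNoetherianRing A] [IsReduced A]
    (p : ℕ) (hFR : IsFRational p A) (P : Ideal A) [P.IsPrime] (hht : P.height = 1) :
    ∃ p0 ∈ P, ∃ u, u ∉ P ∧ ∀ y ∈ P, u * y ∈ Ideal.span {p0} := by
  have hmin : ∀ Q ∈ minimalPrimes A, Q.height = 0 := by
    intro Q hQ
    have := hQ.1.1
    exact Ideal.height_eq_zero_iff.mpr hQ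
  have hex : ∃ a ∈ P, a ∈ offMinimalPrimes A := by
    by_contra! h
    have hsub : (P : Set A) ⊆ ⋃ Q ∈ minimalPrimes A, (id Q : Ideal A) := by
      intro a ha
      have := h a ha
      simp only [offMinimalPrimes, Set.mem_ofPred_eq, not_forall, not_not] at this
      obtain ⟨Q, hQ, haQ⟩ := this
      exact Set.mem_biUnion hQ haQ
    obtain ⟨Q, hQ, hle⟩ := (Ideal.subset_union_prime_finite (f := id)
      (minimalPrimes.finite_of_isNoetherianRing A) ⊥ ⊥ (fun Q hQ _ _ => hQ.1.1)).mp hsub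
    have := Ideal.height_mono hle
    rw [hht, id, hmin Q hQ] at this
    simp at this
  obtain ⟨a, haP, ha⟩ := hex
  have hparam : IsParameterIdeal (Ideal.span {a}) := by
    refine ⟨1, fun _ => a, by simp, ?_⟩
    apply le_antisymm
    · refine (iInf₂_le (⟨P, inferInstance⟩ : PrimeSpectrum A) ?_).trans ?_
      · rw [Ideal.span_singleton_le_iff_mem]; exact haP
      · rw [← PrimeSpectrum.height_eq_orderHeight]
        simp [hht]
    · refine le_iInf₂ fun Q hQ => ?_
      rw [Ideal.span_singleton_le_iff_mem] at hQ
      rw [← PrimeSpectrum.height_eq_orderHeight]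
      by_contra hlt
      exact ha _ (mem_minimalPrimes_of_height_lt Q.asIdeal (by simpa using hlt)) hQ
  have hclosed := hFR _ hparam
  have hPmin : P ∈ (Ideal.span {a}).minimalPrimes := by
    refine ⟨⟨inferInstance, by rwa [Ideal.span_singleton_le_iff_mem]⟩, ?_⟩
    rintro Q ⟨hQ, haQ⟩ hQP
    rw [Ideal.span_singleton_le_iff_mem] at haQ
    by_contra hne
    have hlt : Q < P := lt_of_le_not_ge hQP hne
    have : Q.height + 1 ≤ P.height := Ideal.height_add_one_le_of_lt_of_isPrime hlt
    rw [hht] at this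
    refine ha Q (mem_minimalPrimes_of_height_lt Q ?_) haQ
    exact (ENat.add_one_le_iff (by rintro h; rw [h] at this; simp at this)).mp this
  have hass : P ∈ associatedPrimes A (A ⧸ Ideal.span {a}) := by
    apply Module.associatedPrimes.minimalPrimes_annihilator_subset_associatedPrimes
    rwa [Ideal.annihilator_quotient]
  obtain ⟨b, hb⟩ := (isAssociatedPrime_iff.mp hass).2
  obtain ⟨b, rfl⟩ := Ideal.Quotient.mk_surjective b
  have hbP : ∀ y, y ∈ P ↔ y * b ∈ Ideal.span {a} := by
    intro y
    rw [hb, Submodule.mem_colon_singleton, ← Ideal.Quotient.eq_zero_iff_mem, map_mul]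
    rfl
  have hbn : b ∉ Ideal.span {a} := by
    intro h
    have h1 : (1 : A) ∈ P := (hbP 1).mpr (by simpa using h)
    exact (Ideal.IsPrime.ne_top inferInstance) ((Ideal.eq_top_iff_one P).mpr h1)
  have hw : ∃ p0 ∈ P, ∃ u, u ∉ P ∧ p0 * b = u * a := by
    by_contra! hcon
    apply hbn
    have hstep : ∀ y ∈ P, ∃ w ∈ P, y * b = w * a := by
      intro y hy
      obtain ⟨w, hw⟩ := Ideal.mem_span_singleton'.mp ((hbP y).mp hy)
      refine ⟨w, ?_, hw.symm⟩
      by_contra hwP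
      exact hcon y hy w hwP hw.symm
    have hpow : ∀ k : ℕ, ∀ y ∈ P, ∃ w ∈ P, y * b ^ k = w * a ^ k := by
      intro k
      induction k with
      | zero => intro y hy; exact ⟨y, hy, by simp⟩
      | succ k ih =>
        intro y hy
        obtain ⟨w, hw, h1⟩ := ih y hy
        obtain ⟨v, hv, h2⟩ := hstep w hw
        exact ⟨v, hv, by rw [pow_succ, ← mul_assoc, h1, mul_right_comm, h2]; ring⟩
    have : b ∈ tightClosure p (Ideal.span {a}) := by
      refine ⟨a, ha, 0, fun e _ => ?_⟩
      obtain ⟨w, -, h1⟩ := hpow (p ^ e) a haP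
      rw [h1]
      apply Ideal.mul_mem_left
      exact Ideal.subset_span ⟨a, Ideal.mem_span_singleton_self a, rfl⟩
    rw [hclosed] at this
    exact this
  obtain ⟨p0, hp0, u, hu, hpu⟩ := hw
  refine ⟨p0, hp0, u * u, fun h => hu ((Ideal.IsPrime.mem_or_mem inferInstance h).elim id id), ?_⟩
  intro y hy
  obtain ⟨w, hw⟩ := Ideal.mem_span_singleton'.mp ((hbP y).mp hy)
  have h0 : a * (u * (u * y - p0 * w)) = 0 := by
    linear_combination (-(u * y - p0 * w)) * hpu - p0 * u * hw - p0 * w * hpu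
  have h1 := reduced_mul_eq_zero ha h0
  rw [Ideal.mem_span_singleton']
  exact ⟨u * w, by linear_combination -h1⟩

lemma ringKrullDim_le_of_integral' {A B : Type} [CommRing A] [CommRing B] [Algebra A B]
    [Algebra.IsIntegral A B] : ringKrullDim B ≤ ringKrullDim A := by
  refine Order.krullDim_le_of_strictMono (PrimeSpectrum.comap (algebraMap A B)) ?_
  intro I J hIJ
  exact Ideal.IsIntegral.comap_lt_comap (I := I.asIdeal) (J := J.asIdeal) hIJ

lemma graded_nakayama {K R : Type} [Field K] [CommRing R] [Algebra K R]
    (𝒜 : ℕ → Submodule K R) [GradedAlgebra 𝒜] (a : R) (δ : ℕ) (ha : a ∈ 𝒜 δ) (hδ : 0 < δ)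
    [Module.Finite K (R ⧸ Ideal.span {a})] : ringKrullDim R ≤ 1 := by
  classical
  let _ : Algebra (Polynomial K) R := (Polynomial.aeval (R := K) a).toAlgebra
  have hX : ∀ r : R, (Polynomial.X : Polynomial K) • r = a * r := by
    intro r
    rw [Algebra.smul_def, RingHom.algebraMap_toAlgebra]
    simp
  have hC : ∀ (k : K) (r : R), (Polynomial.C k : Polynomial K) • r = k • r := by
    intro k r
    rw [Algebra.smul_def, RingHom.algebraMap_toAlgebra, Algebra.smul_def]
    simp
  obtain ⟨S0, hS0⟩ := (Module.Finite.fg_top : (⊤ : Submodule K (R ⧸ Ideal.span {a})).FG)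
  choose lft hlft using (Ideal.Quotient.mk_surjective (I := Ideal.span {a}))
  let S : Finset R := S0.image lft
  let G : Finset R := S.biUnion fun s =>
    (DirectSum.decompose 𝒜 s).support.image fun i => (DirectSum.decompose 𝒜 s i : R)
  let V : Submodule K R := Submodule.span K (G : Set R)
  have hSV : ∀ s ∈ S, s ∈ V := by
    intro s hs
    rw [← DirectSum.sum_support_decompose 𝒜 s]
    refine Submodule.sum_mem _ fun i hi => Submodule.subset_span ?_
    exact Finset.mem_biUnion.mpr ⟨s, hs, Finset.mem_image.mpr ⟨i, hi, rfl⟩⟩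
  have hV : ∀ r : R, ∃ v ∈ V, ∃ t, r = v + a * t := by
    intro r
    have h1 : (Ideal.Quotient.mkₐ K (Ideal.span {a})).toLinearMap r ∈
        Submodule.map (Ideal.Quotient.mkₐ K (Ideal.span {a})).toLinearMap V := by
      have : (⊤ : Submodule K (R ⧸ Ideal.span {a})) ≤
          Submodule.map (Ideal.Quotient.mkₐ K (Ideal.span {a})).toLinearMap V := by
        rw [← hS0, Submodule.span_le]
        intro y hy
        exact ⟨lft y, hSV _ (Finset.mem_image_of_mem _ hy), hlft y⟩
      exact this trivial
    obtain ⟨v, hv, h2⟩ := h1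
    have h3 : r - v ∈ Ideal.span {a} := by
      rw [← Ideal.Quotient.eq]
      exact h2.symm
    obtain ⟨t, ht⟩ := Ideal.mem_span_singleton'.mp h3
    exact ⟨v, hv, t, by linear_combination -ht⟩
  have hVk : ∀ v ∈ V, ∀ k, (DirectSum.decompose 𝒜 v k : R) ∈ V := by
    intro v hv k
    induction hv using Submodule.span_induction with
    | mem g hg =>
      obtain ⟨s, hs, h1⟩ := Finset.mem_biUnion.mp hg
      obtain ⟨i, hi, rfl⟩ := Finset.mem_image.mp h1
      by_cases hik : i = k
      · subst hik
        rw [DirectSum.decompose_of_mem_same 𝒜 (SetLike.coe_mem _)]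
        exact Submodule.subset_span hg
      · rw [DirectSum.decompose_of_mem_ne 𝒜 (SetLike.coe_mem _) hik]
        exact V.zero_mem
    | zero => simp
    | add x y _ _ hx hy => simpa using V.add_mem hx hy
    | smul c x _ hx =>
      rw [DirectSum.decompose_smul]
      exact V.smul_mem c hx
  let N : Submodule (Polynomial K) R := Submodule.span (Polynomial K) (G : Set R)
  have hVN : ∀ v ∈ V, v ∈ N := by
    intro v hv
    induction hv using Submodule.span_induction with
    | mem g hg => exact Submodule.subset_span hg
    | zero => exact N.zero_mem
    | add x y _ _ hx hy => exact N.add_mem hx hy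
    | smul c x _ hx => rw [← hC]; exact N.smul_mem _ hx
  have hk : ∀ k, ∀ r ∈ 𝒜 k, r ∈ N := by
    intro k
    induction k using Nat.strong_induction_on with
    | _ k ih =>
      intro r hr
      obtain ⟨v, hv, t, hvt⟩ := hV r
      have h1 : r = (DirectSum.decompose 𝒜 v k : R) + (DirectSum.decompose 𝒜 (a * t) k : R) := by
        conv_lhs => rw [← DirectSum.decompose_of_mem_same 𝒜 hr, hvt]
        simp
      rw [h1]
      refine N.add_mem (hVN _ (hVk v hv k)) ?_
      by_cases hle : δ ≤ k
      · rw [DirectSum.coe_decompose_mul_of_left_mem_of_le 𝒜 ha hle, ← hX]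
        exact N.smul_mem _ (ih (k - δ) (by omega) _ (SetLike.coe_mem _))
      · rw [DirectSum.coe_decompose_mul_of_left_mem_of_not_le 𝒜 ha hle]
        exact N.zero_mem
  have hfin : Module.Finite (Polynomial K) R := by
    refine ⟨⟨G, ?_⟩⟩
    rw [eq_top_iff]
    intro r _
    rw [← DirectSum.sum_support_decompose 𝒜 r]
    exact Submodule.sum_mem _ fun i _ => hk i _ (SetLike.coe_mem _)
  refine (ringKrullDim_le_of_integral' (A := Polynomial K)).trans ?_
  rw [Polynomial.ringKrullDim_of_isNoetherianRing, ringKrullDim_eq_zero_of_field]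
  simp

lemma graded_dim_le_one {K R : Type} [Field K] [CommRing R] [Algebra K R] [Algebra.FiniteType K R]
    (𝒜 : ℕ → Submodule K R) [GradedAlgebra 𝒜]
    (𝔪 : Ideal R) (h𝔪 : 𝔪 = (HomogeneousIdeal.irrelevant 𝒜).toIdeal) (hmax : 𝔪.IsMaximal)
    (a : R) (δ : ℕ) (ha : a ∈ 𝒜 δ) (hmin : 𝔪 ∈ (Ideal.span {a}).minimalPrimes)
    (hnot : 𝔪 ∉ minimalPrimes R) : ringKrullDim R ≤ 1 := by
  classical
  have hmem : ∀ r, r ∈ 𝔪 ↔ (DirectSum.decompose 𝒜 r 0 : R) = 0 := by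
    intro r; rw [h𝔪]; rfl
  have ham : a ∈ 𝔪 := hmin.1.2 (Ideal.mem_span_singleton_self a)
  have hδ : 0 < δ := by
    rcases Nat.eq_zero_or_pos δ with h | h
    · subst h
      rw [hmem, DirectSum.decompose_of_mem_same 𝒜 ha] at ham
      subst ham
      exfalso
      apply hnot
      rw [Ideal.span_singleton_zero] at hmin
      exact hmin
    · exact h
  have hhom : ∀ I : Ideal R, I.IsHomogeneous 𝒜 → I ≠ ⊤ → I ≤ 𝔪 := by
    intro I hI hne r hr
    have hr0 := hI 0 hr
    by_contra hrm
    obtain ⟨s, hs⟩ := hmax.exists_inv hrm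
    apply hne
    obtain ⟨i, hi, h1⟩ := hs
    have h2 : (DirectSum.decompose 𝒜 (s * r + i) 0 : R) = (DirectSum.decompose 𝒜 (1 : R) 0 : R) := by
      rw [h1]
    have h3 : ∀ x y : R, (DirectSum.decompose 𝒜 (x * y) 0 : R) =
        (DirectSum.decompose 𝒜 x 0 : R) * (DirectSum.decompose 𝒜 y 0 : R) := fun x y =>
      map_mul (GradedRing.projZeroRingHom 𝒜) x y
    rw [DirectSum.decompose_add, DirectSum.add_apply, Submodule.coe_add, h3, (hmem i).mp hi,
      DirectSum.decompose_of_mem_same 𝒜 SetLike.GradedOne.one_mem, add_zero] at h2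
    rw [Ideal.eq_top_iff_one, ← h2]
    exact I.mul_mem_left _ hr0
  have hall : ∀ Q : Ideal R, Q.IsPrime → a ∈ Q → 𝔪 ≤ Q := by
    intro Q hQ haQ
    refine le_trans ?_ (Ideal.toIdeal_homogeneousCore_le 𝒜 Q)
    have hp := hQ.homogeneousCore (𝒜 := 𝒜)
    refine hmin.2 ⟨hp, ?_⟩ (hhom _ (HomogeneousIdeal.isHomogeneous _) hp.ne_top)
    rw [Ideal.span_singleton_le_iff_mem]
    exact Ideal.mem_homogeneousCore_of_homogeneous_of_mem ⟨δ, ha⟩ haQ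
  have : Ring.KrullDimLE 0 (R ⧸ Ideal.span {a}) := by
    rw [Ring.krullDimLE_zero_iff]
    intro I hI
    have h1 : 𝔪 ≤ I.comap (Ideal.Quotient.mk (Ideal.span {a})) := by
      refine hall _ inferInstance ?_
      rw [Ideal.mem_comap, Ideal.Quotient.eq_zero_iff_mem.mpr (Ideal.mem_span_singleton_self a)]
      exact I.zero_mem
    have h2 : (I.comap (Ideal.Quotient.mk (Ideal.span {a}))).IsMaximal := by
      rw [← hmax.eq_of_le (Ideal.IsPrime.ne_top inferInstance) h1]
      exact hmax
    rw [← Ideal.map_comap_of_surjective _ Ideal.Quotient.mk_surjective I]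
    refine (Ideal.map_eq_top_or_isMaximal_of_surjective _ Ideal.Quotient.mk_surjective h2).resolve_left ?_
    rw [Ideal.map_comap_of_surjective _ Ideal.Quotient.mk_surjective I]
    exact hI.ne_top
  have : Module.Finite K (R ⧸ Ideal.span {a}) := (Module.finite_iff_krullDimLE_zero K _).mpr this
  exact graded_nakayama 𝒜 a δ ha hδ

lemma transfer_principal {R : Type} [CommRing R] [IsNoetherianRing R] [IsReduced R]
    (p : ℕ) (N : Ideal R) [N.IsPrime] (hFR : IsFRational p (Localization.AtPrime N))
    (P : Ideal R) [hP : P.IsPrime] (hPN : P ≤ N) (hht : P.height = 1) :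
    ∃ p0 ∈ P, ∃ u, u ∉ P ∧ ∀ y ∈ P, u * y ∈ Ideal.span {p0} := by
  classical
  have hdisj : Disjoint (N.primeCompl : Set R) (P : Set R) := by
    rw [Set.disjoint_left]
    intro a ha haP
    exact ha (hPN haP)
  have hnP : ∀ m ∈ N.primeCompl, m ∉ P := fun m hm hmP => hm (hPN hmP)
  have : IsReduced (Localization.AtPrime N) :=
    isReduced_localizationPreserves N.primeCompl (Localization.AtPrime N) inferInstance
  have : IsNoetherianRing (Localization.AtPrime N) :=
    IsLocalization.isNoetherianRing N.primeCompl _ inferInstance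
  have hunder := IsLocalization.under_map_of_isPrime_disjoint N.primeCompl
    (Localization.AtPrime N) hP hdisj
  have hprime := IsLocalization.isPrime_of_isPrime_disjoint N.primeCompl
    (Localization.AtPrime N) P hP hdisj
  have hmemP : ∀ r : R, algebraMap R (Localization.AtPrime N) r ∈
      P.map (algebraMap R (Localization.AtPrime N)) ↔ r ∈ P := by
    intro r
    conv_rhs => rw [← hunder]
    rfl
  have hht' : (P.map (algebraMap R (Localization.AtPrime N))).height = 1 := by
    rw [← IsLocalization.height_under N.primeCompl, hunder, hht]
  obtain ⟨p0', hp0', u', hu', hy'⟩ := principal_of_FRational p hFR _ hht'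
  obtain ⟨⟨a, s⟩, has⟩ := IsLocalization.surj N.primeCompl p0'
  obtain ⟨⟨v, t⟩, hvt⟩ := IsLocalization.surj N.primeCompl u'
  have haP : a ∈ P := by
    rw [← hmemP, ← has]
    exact Ideal.mul_mem_right _ _ hp0'
  have hvP : v ∉ P := by
    rw [← hmemP, ← hvt]
    intro h
    rcases hprime.mem_or_mem h with h | h
    · exact hu' h
    · exact hnP _ t.2 ((hmemP _).mp h)
  have hstep : ∀ y ∈ P, ∃ m, m ∉ P ∧ m * (v * y) ∈ Ideal.span {a} := by
    intro y hy
    have h1 := hy' _ (Ideal.mem_map_of_mem (algebraMap R (Localization.AtPrime N)) hy)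
    obtain ⟨w, hw⟩ := Ideal.mem_span_singleton'.mp h1
    have hsu := IsLocalization.map_units (Localization.AtPrime N) s
    obtain ⟨si, hsi⟩ := hsu.exists_left_inv
    have h2 : algebraMap R (Localization.AtPrime N) (v * y) ∈
        (Ideal.span {a}).map (algebraMap R (Localization.AtPrime N)) := by
      rw [Ideal.map_span, Set.image_singleton, Ideal.mem_span_singleton', map_mul]
      refine ⟨w * si * algebraMap R _ (t : R), ?_⟩
      simp only at has hvt
      rw [← hvt, ← has]
      linear_combination (p0' * w * algebraMap R (Localization.AtPrime N) (t : R)) * hsi +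
        algebraMap R (Localization.AtPrime N) (t : R) * hw
    rw [IsLocalization.algebraMap_mem_map_algebraMap_iff N.primeCompl] at h2
    obtain ⟨m, hm, h3⟩ := h2
    exact ⟨m, hnP m hm, h3⟩
  choose! m hm1 hm2 using hstep
  obtain ⟨Y, hY⟩ := (isNoetherianRing_iff_ideal_fg R).mp inferInstance P
  have hYP : ∀ y ∈ Y, y ∈ P := fun y hy' => hY ▸ Ideal.subset_span hy'
  refine ⟨a, haP, (∏ y ∈ Y, m y) * v, ?_, ?_⟩
  · intro h
    rcases hP.mem_or_mem h with h | h
    · obtain ⟨y, hy, h1⟩ := (Ideal.IsPrime.prod_mem_iff).mp h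
      exact hm1 y (hYP y hy) h1
    · exact hvP h
  · intro y hy
    rw [← hY] at hy
    induction hy using Submodule.span_induction with
    | mem g hg =>
      obtain ⟨w, hw⟩ := Finset.dvd_prod_of_mem m hg
      have : (∏ y ∈ Y, m y) * v * g = w * (m g * (v * g)) := by rw [hw]; ring
      rw [this]
      exact Ideal.mul_mem_left _ _ (hm2 g (hYP g hg))
    | zero => simp
    | add x y _ _ hx hy => rw [mul_add]; exact Ideal.add_mem _ hx hy
    | smul c x _ hx => rw [smul_eq_mul, mul_left_comm]; exact Ideal.mul_mem_left _ _ hx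

lemma frobeniusPower_le {R : Type} [CommRing R] (p : ℕ) [Fact p.Prime] [CharP R p] {d : ℕ}
    (x : Fin d → R) (e : ℕ) :
    frobeniusPower (Ideal.span (Set.range x)) (p ^ e) ≤
      Ideal.span (Set.range fun j => x j ^ p ^ e) := by
  rw [frobeniusPower, Ideal.span_le]
  rintro _ ⟨r, hr, rfl⟩
  obtain ⟨b, rfl⟩ := Ideal.mem_span_range_iff_exists_fun.mp hr
  have : (∑ i, b i * x i) ^ p ^ e = ∑ i, b i ^ p ^ e * x i ^ p ^ e := by
    rw [sum_pow_char_pow]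
    simp_rw [mul_pow]
  simp only [SetLike.mem_coe, this]
  exact Ideal.mem_span_range_iff_exists_fun.mpr ⟨_, rfl⟩

lemma mem_radical_of_tc {R : Type} [CommRing R] [IsNoetherianRing R] [IsReduced R] (p : ℕ)
    [Fact p.Prime] {d : ℕ} (x : Fin d → R) (z c : R) (hc : c ∈ offMinimalPrimes R) (e0 : ℕ)
    (h : ∀ e ≥ e0, c * z ^ p ^ e ∈ Ideal.span (Set.range fun j => x j ^ p ^ e)) :
    z ∈ (Ideal.span (Set.range x)).radical := by
  rw [Ideal.radical_eq_sInf, Submodule.mem_sInf]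
  rintro (N : Ideal R) ⟨hN, hNp⟩
  by_contra hz
  have : IsNoetherianRing (Localization.AtPrime N) :=
    IsLocalization.isNoetherianRing N.primeCompl _ inferInstance
  have hp1 : 1 < p := (Fact.out : p.Prime).one_lt
  have hpow : ∀ i : ℕ, algebraMap R (Localization.AtPrime N) c ∈
      (N.map (algebraMap R (Localization.AtPrime N))) ^ i := by
    intro i
    have h1 := h (e0 + i) (by omega)
    have h2 : c * z ^ p ^ (e0 + i) ∈ N ^ i := by
      refine (Ideal.span_le.mpr ?_) h1
      rintro _ ⟨j, rfl⟩
      refine Ideal.pow_le_pow_right ?_ (Ideal.pow_mem_pow (hN (Ideal.subset_span ⟨j, rfl⟩)) _)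
      exact le_trans (by omega) (Nat.lt_pow_self hp1).le
    have h3 := Ideal.mem_map_of_mem (algebraMap R (Localization.AtPrime N)) h2
    rw [Ideal.map_pow, map_mul] at h3
    have hu : IsUnit (algebraMap R (Localization.AtPrime N) (z ^ p ^ (e0 + i))) :=
      IsLocalization.map_units (M := N.primeCompl) _
        ⟨z ^ p ^ (e0 + i), fun hh => hz (hNp.mem_of_pow_mem _ hh)⟩
    obtain ⟨w, hw⟩ := hu.exists_right_inv
    have := Ideal.mul_mem_right w _ h3
    rwa [mul_assoc, hw, mul_one] at this
  have hbot := Ideal.iInf_pow_eq_bot_of_isLocalRing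
    (N.map (algebraMap R (Localization.AtPrime N))) (by
      rw [Localization.AtPrime.map_eq_maximalIdeal]
      exact Ideal.IsPrime.ne_top inferInstance)
  have h0 : algebraMap R (Localization.AtPrime N) c = 0 := by
    rw [← Ideal.mem_bot, ← hbot, Submodule.mem_iInf]
    exact hpow
  rw [IsLocalization.map_eq_zero_iff N.primeCompl] at h0
  obtain ⟨m, hm⟩ := h0
  have := reduced_mul_eq_zero hc (by rw [mul_comm]; exact hm)
  exact m.2 (by rw [this]; exact N.zero_mem)

lemma persist {K : Type} [Field K] {R : Type} [CommRing R] [Algebra K R]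
    [Algebra.FiniteType K R] [IsReduced R]
    (p : ℕ) [Fact p.Prime] [CharP R p]
    (𝒜 : ℕ → Submodule K R) [GradedAlgebra 𝒜]
    (𝔪 : Ideal R) (h𝔪 : 𝔪 = (HomogeneousIdeal.irrelevant 𝒜).toIdeal)
    (n : ℕ) (hdim : ringKrullDim R = (n + 1 : ℕ))
    (hiso : IsIsolatedNonFRational p 𝔪)
    (x : Fin (n + 1) → R) (degs : Fin (n + 1) → ℕ) (hhom : ∀ j, x j ∈ 𝒜 (degs j)) 
    (z : R) (hz : z ∈ tightClosure p (Ideal.span (Set.range x))) :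
      Ideal.Quotient.mk (Ideal.span {x (Fin.last n)}) z ∈
        tightClosure p (Ideal.span (Set.range fun j : Fin n =>
          Ideal.Quotient.mk (Ideal.span {x (Fin.last n)}) (x j.castSucc))) := by
  classical
  have : Nontrivial R := by
    by_contra hcon
    rw [not_nontrivial_iff_subsingleton] at hcon
    rw [ringKrullDim_eq_bot_of_subsingleton] at hdim
    exact absurd hdim (by exact (WithBot.coe_ne_bot).symm)
  have : IsNoetherianRing R := Algebra.FiniteType.isNoetherianRing K R
  have : CharP K p := ((algebraMap K R).charP_iff (algebraMap K R).injective p).mpr inferInstance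
  obtain ⟨c, hc, e0, h0⟩ := hz
  have h : ∀ e ≥ e0, c * z ^ p ^ e ∈ Ideal.span (Set.range fun j => x j ^ p ^ e) :=
    fun e he => frobeniusPower_le p x e (h0 e he)
  have hp1 : 1 < p := (Fact.out : p.Prime).one_lt
  rcases Nat.eq_zero_or_pos n with hn | hn
  · subst hn
    obtain ⟨k, hk⟩ := mem_radical_of_tc p x z c hc e0 h
    have hk' : Ideal.Quotient.mk (Ideal.span {x (Fin.last 0)}) z ^ k = 0 := by
      rw [← map_pow, Ideal.Quotient.eq_zero_iff_mem]
      refine (Ideal.span_mono ?_) hk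
      rintro _ ⟨j, rfl⟩
      have hj : j = Fin.last 0 := Fin.ext (by simp)
      rw [hj]
      rfl
    refine ⟨1, fun Q hQ h1 => hQ.1.1.ne_top ((Ideal.eq_top_iff_one Q).mpr h1), k, fun e he => ?_⟩
    rw [pow_eq_zero_of_le (he.trans (Nat.lt_pow_self hp1).le) hk', mul_zero]
    exact Ideal.zero_mem _
  · let 𝔠 : Ideal R :=
      { carrier := {b | ∃ e1 : ℕ, ∀ e ≥ e1,
          b * z ^ p ^ e ∈ Ideal.span (Set.range fun j => x j ^ p ^ e)}
        zero_mem' := ⟨0, fun e _ => by rw [zero_mul]; exact Ideal.zero_mem _⟩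
        add_mem' := by
          rintro a b ⟨e1, h1⟩ ⟨e2, h2⟩
          refine ⟨max e1 e2, fun e he => ?_⟩
          rw [add_mul]
          exact Ideal.add_mem _ (h1 e (le_of_max_le_left he)) (h2 e (le_of_max_le_right he))
        smul_mem' := by
          rintro r b ⟨e1, h1⟩
          refine ⟨e1, fun e he => ?_⟩
          rw [smul_eq_mul, mul_assoc]
          exact Ideal.mul_mem_left _ _ (h1 e he) }
    have hkey : ∀ P ∈ (Ideal.span {x (Fin.last n)}).minimalPrimes, ∃ c' ∈ 𝔠, c' ∉ P := by
      intro P hPm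
      have hP : P.IsPrime := hPm.1.1
      by_cases hPmin : P ∈ minimalPrimes R
      · exact ⟨c, ⟨e0, h⟩, hc P hPmin⟩
      have hht : P.height = 1 := by
        apply le_antisymm
        · exact Ideal.height_le_one_of_isPrincipal_of_mem_minimalPrimes _ P hPm
        · by_contra hlt
          exact hPmin (mem_minimalPrimes_of_height_lt P (not_le.mp hlt))
      have hN : ∃ N : Ideal R, N.IsPrime ∧ P ≤ N ∧ N ≠ 𝔪 := by
        by_cases hPe : P = 𝔪
        · by_cases hmax : 𝔪.IsMaximal
          · exfalso
            subst hPe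
            have := graded_dim_le_one 𝒜 P h𝔪 hmax _ _ (hhom (Fin.last n)) hPm hPmin
            rw [hdim] at this
            have h2 : n + 1 ≤ 1 := by exact_mod_cast this
            omega
          · obtain ⟨N, hN, hle⟩ := Ideal.exists_le_maximal P hP.ne_top
            exact ⟨N, hN.isPrime, hle, fun he => hmax (he ▸ hN)⟩
        · exact ⟨P, hP, le_rfl, hPe⟩
      obtain ⟨N, hNp, hPN, hNm⟩ := hN
      obtain ⟨p0, hp0, u, hu, hy⟩ := transfer_principal p N (hiso ⟨N, hNp⟩ hNm) P hPN hht
      obtain ⟨c', hc', h1⟩ := core (K := K) p P p0 u hp0 hu hy x z c (fun s hs hsc => hs (by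
        have hs0 : s = 0 := reduced_mul_eq_zero hc (by rw [mul_comm]; exact hsc)
        rw [hs0]
        exact P.zero_mem)) e0 h
      exact ⟨c', h1, hc'⟩
    have hex : ∃ c' ∈ 𝔠, ∀ P ∈ (Ideal.span {x (Fin.last n)}).minimalPrimes, c' ∉ P := by
      by_contra! hcon
      have hsub : (𝔠 : Set R) ⊆
          ⋃ Q ∈ (Ideal.span {x (Fin.last n)}).minimalPrimes, (id Q : Ideal R) := by
        intro a ha
        obtain ⟨Q, hQ, haQ⟩ := hcon a ha
        exact Set.mem_biUnion hQ haQ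
      obtain ⟨Q, hQ, hle⟩ := (Ideal.subset_union_prime_finite (f := id)
        (Ideal.finite_minimalPrimes_of_isNoetherianRing R _) ⊥ ⊥
        (fun Q hQ _ _ => hQ.1.1)).mp hsub
      obtain ⟨c', hc', hn'⟩ := hkey Q hQ
      exact hn' (hle hc')
    obtain ⟨c', ⟨e1, h1⟩, hc'⟩ := hex
    refine ⟨Ideal.Quotient.mk _ c', ?_, e1, fun e he => ?_⟩
    · intro Q hQ hmem
      refine hc' (Q.comap (Ideal.Quotient.mk _)) ?_ hmem
      rw [Ideal.minimalPrimes_eq_comap]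
      exact ⟨Q, hQ, rfl⟩
    · have h2 := Ideal.mem_map_of_mem (Ideal.Quotient.mk (Ideal.span {x (Fin.last n)})) (h1 e he)
      rw [map_mul, map_pow, Ideal.map_span] at h2
      refine (Ideal.span_le.mpr ?_) h2
      rintro _ ⟨_, ⟨j, rfl⟩, rfl⟩
      simp only [map_pow]
      refine Fin.lastCases ?_ (fun j => ?_) j
      · rw [Ideal.Quotient.eq_zero_iff_mem.mpr (Ideal.mem_span_singleton_self _),
          zero_pow (by positivity)]
        exact Ideal.zero_mem _
      · exact Ideal.subset_span ⟨_, Ideal.subset_span ⟨j, rfl⟩, rfl⟩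

lemma limit_lift {R : Type} [CommRing R] (n : ℕ) (x : Fin (n + 1) → R) (r : R)
    (hr : Ideal.Quotient.mk (Ideal.span {x (Fin.last n)}) r ∈
        limitClosure (fun j : Fin n =>
          Ideal.Quotient.mk (Ideal.span {x (Fin.last n)}) (x j.castSucc))) :
      r ∈ limitClosure x := by
  obtain ⟨s, hs, h⟩ := hr
  refine ⟨s, hs, ?_⟩
  rw [Ideal.mem_span_range_iff_exists_fun] at h
  obtain ⟨b, hb⟩ := h
  choose l hl using (Ideal.Quotient.mk_surjective (I := Ideal.span {x (Fin.last n)}))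
  have h1 : (∏ j : Fin n, x j.castSucc) ^ (s - 1) * r - ∑ i, l (b i) * x i.castSucc ^ s ∈
      Ideal.span {x (Fin.last n)} := by
    rw [← Ideal.Quotient.eq_zero_iff_mem]
    simp only [map_sub, map_mul, map_pow, map_prod, map_sum, hl, hb, sub_self]
  obtain ⟨t, ht⟩ := Ideal.mem_span_singleton'.mp h1
  rw [Fin.prod_univ_castSucc, mul_pow]
  have h2 : (∏ j : Fin n, x j.castSucc) ^ (s - 1) * x (Fin.last n) ^ (s - 1) * r =
      ∑ i, (x (Fin.last n) ^ (s - 1) * l (b i)) * x i.castSucc ^ s + t * x (Fin.last n) ^ s := by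
    obtain ⟨k, rfl⟩ : ∃ k, s = k + 1 := ⟨s - 1, by omega⟩
    simp only [mul_assoc, ← Finset.mul_sum]
    simp only [Nat.add_sub_cancel] at ht ⊢
    simp only [pow_succ (x (Fin.last n))]
    linear_combination -(x (Fin.last n) ^ k) * ht
  rw [h2]
  refine Ideal.add_mem _ (Ideal.sum_mem _ fun i _ => ?_) ?_
  · exact Ideal.mul_mem_left _ _ (Ideal.subset_span ⟨i.castSucc, rfl⟩)
  · exact Ideal.mul_mem_left _ _ (Ideal.subset_span ⟨Fin.last n, rfl⟩)

/-- let `(R,𝔪)` be an ℕ-graded isolated non-`F`-rational singularity of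
dimension `d` (`= n+1` below), `x_1,…,x_d` a homogeneous sop, and `φ : R → R̄ = R/x_dR` the
natural surjection.  Then `φ` maps `(x_1,…,x_d)^*` into `(x̄_1,…,x̄_{d-1})^*` (so it induces
`φ̄ : (x_1,…,x_d)^* → (x̄_1,…,x̄_{d-1})^*/(x̄_1,…,x̄_{d-1})^lim`), the kernel of `φ̄` is
contained in `(x_1,…,x_d)^lim`, and hence for every `n ∈ ℤ`, if
`[(x_1,…,x_d)^*/(x_1,…,x_d)^lim]_n ≠ 0` then `[(x̄_1,…,x̄_{d-1})^*/(x̄_1,…,x̄_{d-1})^lim]_n ≠ 0`. -/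
theorem stmt16 {K : Type} [Field K] {R : Type} [CommRing R] [Algebra K R]
    [Algebra.FiniteType K R] [IsReduced R]
    (p : ℕ) [Fact p.Prime] [CharP R p]
    (𝒜 : ℕ → Submodule K R) [GradedAlgebra 𝒜]
    (𝔪 : Ideal R) (h𝔪 : 𝔪 = (HomogeneousIdeal.irrelevant 𝒜).toIdeal)
    (n : ℕ) (hdim : ringKrullDim R = (n + 1 : ℕ))
    (hequi : ∀ P ∈ minimalPrimes R, ringKrullDim (R ⧸ P) = ringKrullDim R)
    (hiso : IsIsolatedNonFRational p 𝔪)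
    (x : Fin (n + 1) → R) (degs : Fin (n + 1) → ℕ) (hhom : ∀ j, x j ∈ 𝒜 (degs j))
    (hsop : (Ideal.span (Set.range x)).radical = 𝔪) :
    (∀ r ∈ tightClosure p (Ideal.span (Set.range x)),
      Ideal.Quotient.mk (Ideal.span {x (Fin.last n)}) r ∈
        tightClosure p (Ideal.span (Set.range fun j : Fin n =>
          Ideal.Quotient.mk (Ideal.span {x (Fin.last n)}) (x j.castSucc)))) ∧
    (∀ r ∈ tightClosure p (Ideal.span (Set.range x)),
      Ideal.Quotient.mk (Ideal.span {x (Fin.last n)}) r ∈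
        limitClosure (fun j : Fin n =>
          Ideal.Quotient.mk (Ideal.span {x (Fin.last n)}) (x j.castSucc)) →
      r ∈ limitClosure x) ∧
    (∀ m : ℤ,
      (∃ z : R, z ∈ gradeZ 𝒜 m ∧ z ∈ tightClosure p (Ideal.span (Set.range x)) ∧
        z ∉ limitClosure x) →
      ∃ w : R, w ∈ gradeZ 𝒜 m ∧
        Ideal.Quotient.mk (Ideal.span {x (Fin.last n)}) w ∈
          tightClosure p (Ideal.span (Set.range fun j : Fin n =>
            Ideal.Quotient.mk (Ideal.span {x (Fin.last n)}) (x j.castSucc))) ∧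
        Ideal.Quotient.mk (Ideal.span {x (Fin.last n)}) w ∉
          limitClosure (fun j : Fin n =>
            Ideal.Quotient.mk (Ideal.span {x (Fin.last n)}) (x j.castSucc))) := by
  have h1 := persist p 𝒜 𝔪 h𝔪 n hdim hiso x degs hhom
  have h2 := limit_lift n x
  refine ⟨h1, fun r _ => h2 r, ?_⟩
  rintro m ⟨z, hz, hzt, hzl⟩
  exact ⟨z, hz, h1 z hzt, fun h => hzl (h2 z h)⟩
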